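/- arXiv:1405.3375 — 2 statements merged into one kernel-verified Lean document; each statement's English description precedes it below -/
import Mathlib

section
/- The class of Gorenstein weak injective R-modules is closed under direct summands. -/
open CategoryTheory

universe u

noncomputable section

variable (R : Type u) [Ring R]

/-- Vanishing of `Ext^n_R(N, M)` for left `R`-modules, expressed via the `Ext` bifunctor
on the `ℤ`-linear abelian category `ModuleCat R`. -/
def ExtVanish (n : ℕ) (N M : ModuleCat.{u} R) : Prop :=
  Subsingleton (((_root_.Ext ℤ (ModuleCat.{u} R) n).obj (Opposite.op N)).obj M)

/-- An `R`-module is super finitely presented if it admits a resolution by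
finitely generated projective modules. -/
def SuperFinitelyPresented (N : ModuleCat.{u} R) : Prop :=
  ∃ (F : ℕ → ModuleCat.{u} R) (d : ∀ n, F (n + 1) →ₗ[R] F n) (ε : F 0 →ₗ[R] N),
    (∀ n, Module.Finite R (F n)) ∧ (∀ n, Module.Projective R (F n)) ∧
    Function.Surjective ε ∧ Function.Exact (d 0) ε ∧
    (∀ n, Function.Exact (d (n + 1)) (d n))

/-- An `R`-module `W` is weak injective if `Ext^1_R(N, W) = 0` for every super finitely
presented module `N`. -/
def WeakInjective (W : ModuleCat.{u} R) : Prop :=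
  ∀ N : ModuleCat.{u} R, SuperFinitelyPresented R N → ExtVanish R 1 N W

/-- `wid_R M ≤ n` : `Ext^{n+1}_R(N, M) = 0` for every super finitely presented `N`. -/
def WidLE (M : ModuleCat.{u} R) (n : ℕ) : Prop :=
  ∀ N : ModuleCat.{u} R, SuperFinitelyPresented R N → ExtVanish R (n + 1) N M

/-- The weak injective dimension, as an element of `ℕ∞`. -/
def Wid (M : ModuleCat.{u} R) : ℕ∞ :=
  sInf {c : ℕ∞ | ∃ n : ℕ, c = n ∧ WidLE R M n}

/-- A doubly infinite exact complex of injective modules which stays exact after applying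
`Hom_R(W, -)` for every module `W` in the test class `𝒯`. -/
def IsTotallyAcyclicInjComplex (𝒯 : ModuleCat.{u} R → Prop)
    (I : ℤ → ModuleCat.{u} R) (d : ∀ n : ℤ, I n →ₗ[R] I (n + 1)) : Prop :=
  (∀ n, Module.Injective R (I n)) ∧
  (∀ n, Function.Exact (d n) (d (n + 1))) ∧
  (∀ W : ModuleCat.{u} R, 𝒯 W → ∀ n,
    Function.Exact (fun g : W →ₗ[R] I n => (d n).comp g)
      (fun g : W →ₗ[R] I (n + 1) => (d (n + 1)).comp g))

/-- `M` is Gorenstein injective relative to the test class `𝒯` : `M` is the cokernel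
`Coker (I_1 → I_0)` of a `Hom(𝒯, -)`-exact exact complex of injective modules. -/
def GorensteinRelInjective (𝒯 : ModuleCat.{u} R → Prop) (M : ModuleCat.{u} R) : Prop :=
  ∃ (I : ℤ → ModuleCat.{u} R) (d : ∀ n : ℤ, I n →ₗ[R] I (n + 1)) (π : I 0 →ₗ[R] M),
    IsTotallyAcyclicInjComplex R 𝒯 I d ∧
    Function.Surjective π ∧ Function.Exact (d (-1)) π

/-- Gorenstein weak injective modules: the test class is that of weak injective modules. -/
def GorensteinWeakInjective (M : ModuleCat.{u} R) : Prop :=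
  GorensteinRelInjective R (WeakInjective R) M

/-- Gorenstein injective modules: the test class is that of injective modules. -/
def GorensteinInjective (M : ModuleCat.{u} R) : Prop :=
  GorensteinRelInjective R (fun E => Module.Injective R E) M

/-- The data of an exact sequence `0 → M → G^0 → ⋯ → G^n → 0` (the modules `G^i` for
`i > n` being trivial). -/
def IsFiniteCoresolution (M : ModuleCat.{u} R) (n : ℕ) (G : ℕ → ModuleCat.{u} R)
    (d : ∀ i, G i →ₗ[R] G (i + 1)) (ε : M →ₗ[R] G 0) : Prop :=
  Function.Injective ε ∧ Function.Exact ε (d 0) ∧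
  (∀ i, Function.Exact (d i) (d (i + 1))) ∧
  (∀ i, n < i → ∀ x : G i, x = 0)

/-- `Gwid_R M ≤ n` : `M` has a coresolution of length `n` by Gorenstein weak injective
modules. -/
def GwidLE (M : ModuleCat.{u} R) (n : ℕ) : Prop :=
  ∃ (G : ℕ → ModuleCat.{u} R) (d : ∀ i, G i →ₗ[R] G (i + 1)) (ε : M →ₗ[R] G 0),
    IsFiniteCoresolution R M n G d ε ∧ ∀ i, GorensteinWeakInjective R (G i)

/-- The Gorenstein weak injective dimension, as an element of `ℕ∞`. -/
def Gwid (M : ModuleCat.{u} R) : ℕ∞ :=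
  sInf {c : ℕ∞ | ∃ n : ℕ, c = n ∧ GwidLE R M n}

/-- `Gid_R M ≤ n`, via coresolutions by Gorenstein injective modules. -/
def GidLE (M : ModuleCat.{u} R) (n : ℕ) : Prop :=
  ∃ (G : ℕ → ModuleCat.{u} R) (d : ∀ i, G i →ₗ[R] G (i + 1)) (ε : M →ₗ[R] G 0),
    IsFiniteCoresolution R M n G d ε ∧ ∀ i, GorensteinInjective R (G i)

/-- The Gorenstein injective dimension, as an element of `ℕ∞`. -/
def Gid (M : ModuleCat.{u} R) : ℕ∞ :=
  sInf {c : ℕ∞ | ∃ n : ℕ, c = n ∧ GidLE R M n}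

/-- `id_R M ≤ n`, via coresolutions by injective modules. -/
def IdLE (M : ModuleCat.{u} R) (n : ℕ) : Prop :=
  ∃ (G : ℕ → ModuleCat.{u} R) (d : ∀ i, G i →ₗ[R] G (i + 1)) (ε : M →ₗ[R] G 0),
    IsFiniteCoresolution R M n G d ε ∧ ∀ i, Module.Injective R (G i)

/-- The injective dimension, as an element of `ℕ∞`. -/
def Idim (M : ModuleCat.{u} R) : ℕ∞ :=
  sInf {c : ℕ∞ | ∃ n : ℕ, c = n ∧ IdLE R M n}

/-- The data of an exact sequence `0 → P_n → ⋯ → P_0 → M → 0`. -/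
def IsFiniteResolution (M : ModuleCat.{u} R) (n : ℕ) (P : ℕ → ModuleCat.{u} R)
    (d : ∀ i, P (i + 1) →ₗ[R] P i) (ε : P 0 →ₗ[R] M) : Prop :=
  Function.Surjective ε ∧ Function.Exact (d 0) ε ∧
  (∀ i, Function.Exact (d (i + 1)) (d i)) ∧
  (∀ i, n < i → ∀ x : P i, x = 0)

/-- `pd_R M ≤ n`, via resolutions by projective modules. -/
def PdLE (M : ModuleCat.{u} R) (n : ℕ) : Prop :=
  ∃ (P : ℕ → ModuleCat.{u} R) (d : ∀ i, P (i + 1) →ₗ[R] P i) (ε : P 0 →ₗ[R] M),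
    IsFiniteResolution R M n P d ε ∧ ∀ i, Module.Projective R (P i)

end

variable (R : Type u) [Ring R]

/-- A short exact sequence `0 → L → M → N → 0` of `R`-modules. -/
def ShortExactSeq (L M N : ModuleCat.{u} R) (f : L →ₗ[R] M) (g : M →ₗ[R] N) : Prop :=
  Function.Injective f ∧ Function.Surjective g ∧ Function.Exact f g

/-- Exactness of `0 → Hom(C, X) → Hom(B, X) → Hom(A, X) → 0` induced by
`0 → A → B → C → 0`. -/
def HomContraExact (X : ModuleCat.{u} R) {A B C : ModuleCat.{u} R}
    (f : A →ₗ[R] B) (g : B →ₗ[R] C) : Prop :=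
  Function.Injective (fun h : C →ₗ[R] X => h.comp g) ∧
  Function.Exact (fun h : C →ₗ[R] X => h.comp g) (fun h : B →ₗ[R] X => h.comp f) ∧
  Function.Surjective (fun h : B →ₗ[R] X => h.comp f)

/-- A short exact sequence is `GWI`-copure exact if `Hom_R(-, X)` leaves it exact for
every Gorenstein weak injective module `X`. -/
def GWICopureExact {A B C : ModuleCat.{u} R} (f : A →ₗ[R] B) (g : B →ₗ[R] C) : Prop :=
  ShortExactSeq R A B C f g ∧
  ∀ X : ModuleCat.{u} R, GorensteinWeakInjective R X → HomContraExact R X f g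

/-- `M` is `GWI`-copure injective if `Hom_R(-, M)` is exact on every `GWI`-copure exact
sequence. -/
def GWICopureInjectiveMod (M : ModuleCat.{u} R) : Prop :=
  ∀ (A B C : ModuleCat.{u} R) (f : A →ₗ[R] B) (g : B →ₗ[R] C),
    GWICopureExact R f g → HomContraExact R M f g

/-- `φ : M → G` is a Gorenstein weak injective preenvelope of `M`. -/
def GWIPreenvelope (M G : ModuleCat.{u} R) (φ : M →ₗ[R] G) : Prop :=
  GorensteinWeakInjective R G ∧
  ∀ G' : ModuleCat.{u} R, GorensteinWeakInjective R G' →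
    ∀ f : M →ₗ[R] G', ∃ g : G →ₗ[R] G', g.comp φ = f

/-- A `WI`-pure Tate injective resolution of `M` : an injective resolution
`0 → M → E^0 → E^1 → ⋯`, a `WI`-pure exact complex `T` of injectives, and a chain map
`u : E → T` which is an isomorphism in all sufficiently large degrees. -/
def WIPureTateInjectiveResolution (M : ModuleCat.{u} R)
    (E : ℕ → ModuleCat.{u} R) (dE : ∀ n, E n →ₗ[R] E (n + 1)) (ε : M →ₗ[R] E 0)
    (T : ℤ → ModuleCat.{u} R) (dT : ∀ n : ℤ, T n →ₗ[R] T (n + 1))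
    (u : ∀ n : ℕ, E n →ₗ[R] T n) : Prop :=
  (∀ n, Module.Injective R (E n)) ∧ Function.Injective ε ∧
  Function.Exact ε (dE 0) ∧ (∀ n, Function.Exact (dE n) (dE (n + 1))) ∧
  IsTotallyAcyclicInjComplex R (WeakInjective R) T dT ∧
  (∀ n : ℕ, (dT n).comp (u n) = (u (n + 1)).comp (dE n)) ∧
  ∃ N : ℕ, ∀ n, N ≤ n → Function.Bijective (u n)

/-- Vanishing of the relative Tate cohomology `Êxt^i_GWI(N, M)` for all `i ∈ ℤ`,
computed from the `WI`-pure exact complex `T` : the complex `Hom_R(N, T)` is exact. -/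
def ExtHatVanishesAll (N : ModuleCat.{u} R) (T : ℤ → ModuleCat.{u} R)
    (dT : ∀ n : ℤ, T n →ₗ[R] T (n + 1)) : Prop :=
  ∀ n : ℤ, Function.Exact (fun g : N →ₗ[R] T n => (dT n).comp g)
    (fun g : N →ₗ[R] T (n + 1) => (dT (n + 1)).comp g)

section RelativeExactness

variable {R} {𝒯 : ModuleCat.{u} R → Prop}
variable {X Y Z M A E E' : Type u} [AddCommGroup X] [AddCommGroup Y] [AddCommGroup Z]
  [AddCommGroup M] [AddCommGroup A] [AddCommGroup E] [AddCommGroup E']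
  [Module R X] [Module R Y] [Module R Z] [Module R M] [Module R A] [Module R E] [Module R E']

theorem extVanish_succ_of_injective (n : ℕ) (N W : ModuleCat.{u} R) [Module.Injective R W] :
    ExtVanish R (n + 1) N W := by
  have : Injective W := Module.injective_object_of_injective_module R W
  let P := projectiveResolution N
  refine ModuleCat.subsingleton_of_isZero (Limits.IsZero.of_iso ?_ (P.isoExt (n + 1) W))
  rw [← HomologicalComplex.exactAt_iff_isZero_homology,
    HomologicalComplex.exactAt_iff' _ n (n + 1) (n + 2) (by simp) (by simp),
    ShortComplex.moduleCat_exact_iff]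
  intro f hf
  have hP := (HomologicalComplex.exactAt_iff' _ (n + 2) (n + 1) n (by simp) (by simp)).1
    (P.complex_exactAt_succ n)
  exact ⟨hP.descToInjective f hf, hP.comp_descToInjective f hf⟩

theorem WeakInjective.of_injective (W : ModuleCat.{u} R) [Module.Injective R W] :
    WeakInjective R W :=
  fun N _ => extVanish_succ_of_injective 0 N W

theorem Module.Injective.prod (hX : Module.Injective R X) (hY : Module.Injective R Y) :
    Module.Injective R (X × Y) :=
  ⟨fun _ _ _ _ _ _ f hf g => by
    obtain ⟨h₁, e₁⟩ := hX.out f hf (LinearMap.fst R X Y ∘ₗ g)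
    obtain ⟨h₂, e₂⟩ := hY.out f hf (LinearMap.snd R X Y ∘ₗ g)
    exact ⟨h₁.prod h₂, fun x => Prod.ext (e₁ x) (e₂ x)⟩⟩

/-- Every linear map from a module in the class `𝒯` lifts along `q`. -/
def LiftsFrom (𝒯 : ModuleCat.{u} R → Prop) (q : Y →ₗ[R] Z) : Prop :=
  ∀ W : ModuleCat.{u} R, 𝒯 W → ∀ g : W →ₗ[R] Z, ∃ h : W →ₗ[R] Y, ∀ w, q (h w) = g w

theorem LiftsFrom.surjective {q : Y →ₗ[R] Z} (hq : LiftsFrom 𝒯 q)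
    (hR : 𝒯 (ModuleCat.of R R)) : Function.Surjective q := fun z => by
  obtain ⟨h, hh⟩ := hq _ hR (LinearMap.toSpanSingleton R Z z)
  exact ⟨h (1 : R), (hh (1 : R)).trans (one_smul R z)⟩

/-- The sequence `0 → X → Y → Z` is exact and every map from a module in `𝒯` to `Z` lifts
to `Y`. -/
structure RelExact (𝒯 : ModuleCat.{u} R → Prop) (j : X →ₗ[R] Y) (q : Y →ₗ[R] Z) : Prop where
  injective : Function.Injective j
  exact : Function.Exact j q
  lifts : LiftsFrom 𝒯 q

namespace RelExact

theorem factor {j : X →ₗ[R] Y} {q : Y →ₗ[R] Z} (h : RelExact 𝒯 j q)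
    {W : Type u} [AddCommGroup W] [Module R W] (g : W →ₗ[R] Y) (hg : ∀ w, q (g w) = 0) :
    ∃ k : W →ₗ[R] X, ∀ w, j (k w) = g w := by
  refine ⟨(LinearEquiv.ofInjective j h.injective).symm.toLinearMap ∘ₗ
    g.codRestrict (LinearMap.range j) fun w => (h.exact _).1 (hg w), fun w => ?_⟩
  exact congrArg Subtype.val ((LinearEquiv.ofInjective j h.injective).apply_symm_apply _)

theorem of_ker {q : Y →ₗ[R] Z} (hq : LiftsFrom 𝒯 q) :
    RelExact 𝒯 (LinearMap.ker q).subtype q :=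
  ⟨Subtype.val_injective, fun y => ⟨fun hy => ⟨⟨y, hy⟩, rfl⟩, by rintro ⟨k, rfl⟩; exact k.2⟩, hq⟩

theorem of_mkQ {j : X →ₗ[R] Y} (hj : Function.Injective j)
    (hq : LiftsFrom 𝒯 (LinearMap.range j).mkQ) : RelExact 𝒯 j (LinearMap.range j).mkQ :=
  ⟨hj, LinearMap.exact_map_mkQ_range j, hq⟩

theorem inl_snd : RelExact 𝒯 (LinearMap.inl R X Y) (LinearMap.snd R X Y) :=
  ⟨LinearMap.inl_injective, Function.Exact.inl_snd, fun _ _ g =>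
    ⟨LinearMap.inr R X Y ∘ₗ g, fun _ => rfl⟩⟩

section Horseshoe

variable {j : X →ₗ[R] Y} {q : Y →ₗ[R] Z}

theorem lifts_coprod (h : RelExact 𝒯 j q) {π : E →ₗ[R] X} (hπ : LiftsFrom 𝒯 π)
    {s : E' →ₗ[R] Y} (hs : LiftsFrom 𝒯 (q ∘ₗ s)) : LiftsFrom 𝒯 ((j ∘ₗ π).coprod s) := by
  intro W hW g
  obtain ⟨b, hb⟩ := hs W hW (q ∘ₗ g)
  obtain ⟨x, hx⟩ := h.factor (g - s ∘ₗ b) fun w => by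
    simpa [sub_eq_zero] using (hb w).symm
  obtain ⟨a, ha⟩ := hπ W hW x
  exact ⟨a.prod b, fun w => by simp [ha, hx]⟩

theorem ker_coprod (h : RelExact 𝒯 j q) {π : E →ₗ[R] X} (hπ : LiftsFrom 𝒯 π)
    (s : E' →ₗ[R] Y) :
    ∃ (f : LinearMap.ker π →ₗ[R] LinearMap.ker ((j ∘ₗ π).coprod s))
      (g : LinearMap.ker ((j ∘ₗ π).coprod s) →ₗ[R] LinearMap.ker (q ∘ₗ s)), RelExact 𝒯 f g := by
  have hqj : ∀ x, q (j x) = 0 := h.exact.apply_apply_eq_zero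
  refine ⟨(LinearMap.inl R E E').restrict fun x hx => by
      simp [LinearMap.mem_ker.1 hx],
    (LinearMap.snd R E E').restrict fun x hx => ?_, ?_, ?_, ?_⟩
  · have := congrArg q (LinearMap.mem_ker.1 hx)
    simpa [hqj] using this
  · intro x y hxy
    exact Subtype.ext (congrArg (fun z => z.1.1) hxy)
  · rintro ⟨⟨a, b⟩, hab⟩
    constructor
    · intro hb
      obtain rfl : b = 0 := congrArg Subtype.val hb
      have ha : j (π a) = 0 := by simpa using hab
      exact ⟨⟨a, h.injective (by simpa using ha)⟩, rfl⟩
    · rintro ⟨x, hx⟩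
      exact Subtype.ext (congrArg (fun z => z.1.2) hx).symm
  · intro W hW g
    obtain ⟨x, hx⟩ := h.factor (s ∘ₗ (LinearMap.ker (q ∘ₗ s)).subtype ∘ₗ g) fun w => (g w).2
    obtain ⟨a, ha⟩ := hπ W hW x
    refine ⟨((-a).prod ((LinearMap.ker (q ∘ₗ s)).subtype ∘ₗ g)).codRestrict _ fun w => ?_,
      fun w => rfl⟩
    simp [ha, hx]

variable {a : X →ₗ[R] E} {b : Z →ₗ[R] E'} {t : Y →ₗ[R] E}

theorem injective_prod (h : RelExact 𝒯 j q) (ha : Function.Injective a)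
    (hb : Function.Injective b) (ht : ∀ x, t (j x) = a x) :
    Function.Injective (t.prod (b ∘ₗ q)) := by
  rw [injective_iff_map_eq_zero]
  intro y hy
  obtain ⟨h₁, h₂⟩ := Prod.ext_iff.1 hy
  obtain ⟨x, rfl⟩ := (h.exact y).1 (hb (by simpa using h₂))
  have : a x = a 0 := by simpa [ht] using h₁
  rw [ha this, map_zero]

theorem mkQ_range_prod (h : RelExact 𝒯 j q) (hq : Function.Surjective q)
    (hb : Function.Injective b) (ht : ∀ x, t (j x) = a x)
    (hb' : LiftsFrom 𝒯 (LinearMap.range b).mkQ) :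
    ∃ (f : (E ⧸ LinearMap.range a) →ₗ[R] ((E × E') ⧸ LinearMap.range (t.prod (b ∘ₗ q))))
      (g : ((E × E') ⧸ LinearMap.range (t.prod (b ∘ₗ q))) →ₗ[R] (E' ⧸ LinearMap.range b)),
      RelExact 𝒯 f g ∧ (∀ x, f ((LinearMap.range a).mkQ x) =
        (LinearMap.range (t.prod (b ∘ₗ q))).mkQ (x, 0)) ∧
      ∀ z, g ((LinearMap.range (t.prod (b ∘ₗ q))).mkQ z) = (LinearMap.range b).mkQ z.2 := by
  have hqj : ∀ x, q (j x) = 0 := h.exact.apply_apply_eq_zero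
  refine ⟨Submodule.mapQ _ _ (LinearMap.inl R E E') ?_,
    Submodule.mapQ _ _ (LinearMap.snd R E E') ?_, ⟨?_, ?_, ?_⟩, fun _ => rfl, fun _ => rfl⟩
  · rintro _ ⟨x, rfl⟩
    exact ⟨j x, by simp [ht, hqj]⟩
  · rintro _ ⟨y, rfl⟩
    exact ⟨q y, rfl⟩
  · rw [injective_iff_map_eq_zero]
    intro x hx
    obtain ⟨e, rfl⟩ := Submodule.mkQ_surjective _ x
    obtain ⟨y, hy⟩ := (Submodule.Quotient.mk_eq_zero _).1 hx
    obtain ⟨h₁, h₂⟩ := Prod.ext_iff.1 hy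
    obtain ⟨x, rfl⟩ := (h.exact y).1 (hb (by simpa using h₂))
    exact (Submodule.Quotient.mk_eq_zero _).2 ⟨x, by simpa [ht] using h₁⟩
  · intro x
    obtain ⟨⟨e, e'⟩, rfl⟩ := Submodule.mkQ_surjective _ x
    constructor
    · intro hx
      obtain ⟨z, rfl⟩ := (Submodule.Quotient.mk_eq_zero _).1 hx
      obtain ⟨y, rfl⟩ := hq z
      refine ⟨(LinearMap.range a).mkQ (e - t y), ?_⟩
      refine (Submodule.Quotient.eq _).2 ⟨-y, ?_⟩
      simp
    · rintro ⟨y, hy⟩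
      obtain ⟨y, rfl⟩ := Submodule.mkQ_surjective _ y
      rw [← hy]
      exact (Submodule.Quotient.mk_eq_zero _).2 (zero_mem _)
  · intro W hW g
    obtain ⟨k, hk⟩ := hb' W hW g
    exact ⟨Submodule.mkQ _ ∘ₗ LinearMap.inr R E E' ∘ₗ k, hk⟩

theorem lifts_mkQ_range_prod (h : RelExact 𝒯 j q) (hq : Function.Surjective q)
    (hb : Function.Injective b) (ht : ∀ x, t (j x) = a x)
    (ha' : LiftsFrom 𝒯 (LinearMap.range a).mkQ) (hb' : LiftsFrom 𝒯 (LinearMap.range b).mkQ) :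
    LiftsFrom 𝒯 (LinearMap.range (t.prod (b ∘ₗ q))).mkQ := by
  obtain ⟨f, g, hfg, hf, hg⟩ := h.mkQ_range_prod hq hb ht hb'
  intro W hW w
  obtain ⟨k, hk⟩ := hb' W hW (g ∘ₗ w)
  obtain ⟨l, hl⟩ := hfg.factor (w - Submodule.mkQ _ ∘ₗ LinearMap.inr R E E' ∘ₗ k) fun v => by
    have := hk v
    simp only [LinearMap.comp_apply] at this
    simp [-Submodule.mkQ_apply, hg, this]
  obtain ⟨m, hm⟩ := ha' W hW l
  refine ⟨m.prod k, fun v => ?_⟩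
  have e₁ := hf (m v)
  rw [hm, hl] at e₁
  have : (m.prod k v) = (m v, 0) + LinearMap.inr R E E' (k v) := by simp
  rw [this, map_add, ← e₁]
  simp [-Submodule.mkQ_apply]

end Horseshoe

section Retract

variable {i : A →ₗ[R] M} {p : M →ₗ[R] A}

theorem lifts_comp_of_retract (hpi : ∀ x, p (i x) = x) {π : E →ₗ[R] M} (hπ : LiftsFrom 𝒯 π) :
    LiftsFrom 𝒯 (p ∘ₗ π) := fun W hW g => by
  obtain ⟨k, hk⟩ := hπ W hW (i ∘ₗ g)
  exact ⟨k, fun w => by simp [hk, hpi]⟩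

theorem ker_prod_of_retract (hpi : ∀ x, p (i x) = x) {π : E →ₗ[R] M} (hπ : LiftsFrom 𝒯 π) :
    ∃ (f : (LinearMap.ker π × LinearMap.ker π) →ₗ[R]
        (LinearMap.ker (p ∘ₗ π) × LinearMap.ker ((LinearMap.id - i ∘ₗ p) ∘ₗ π)))
      (g : (LinearMap.ker (p ∘ₗ π) × LinearMap.ker ((LinearMap.id - i ∘ₗ p) ∘ₗ π)) →ₗ[R] M),
      RelExact 𝒯 f g := by
  refine ⟨(Submodule.inclusion (LinearMap.ker_le_ker_comp _ _)).prodMap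
      (Submodule.inclusion (LinearMap.ker_le_ker_comp _ _)),
    (π ∘ₗ Submodule.subtype _).coprod (π ∘ₗ Submodule.subtype _), ?_, ?_, ?_⟩
  · exact (Submodule.inclusion_injective (LinearMap.ker_le_ker_comp π p)).prodMap
      (Submodule.inclusion_injective (LinearMap.ker_le_ker_comp π (LinearMap.id - i ∘ₗ p)))
  · rintro ⟨⟨x, hx⟩, ⟨y, hy⟩⟩
    constructor
    · intro h
      have h : π x + π y = 0 := h
      have hx : p (π x) = 0 := hx
      have hy : π y - i (p (π y)) = 0 := hy
      have hpy : p (π y) = 0 := by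
        have := congrArg p h
        simpa [hx] using this
      have hy0 : π y = 0 := by simpa [hpy] using hy
      have hx0 : π x = 0 := by simpa [hy0] using h
      exact ⟨(⟨x, hx0⟩, ⟨y, hy0⟩), rfl⟩
    · rintro ⟨⟨⟨a, ha⟩, ⟨b, hb⟩⟩, h⟩
      rw [← h]
      change π a + π b = 0
      rw [LinearMap.mem_ker.1 ha, LinearMap.mem_ker.1 hb, add_zero]
  · intro W hW g
    obtain ⟨k, hk⟩ := hπ W hW (g - i ∘ₗ p ∘ₗ g)
    obtain ⟨l, hl⟩ := hπ W hW (i ∘ₗ p ∘ₗ g)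
    refine ⟨(k.codRestrict _ fun w => ?_).prod (l.codRestrict _ fun w => ?_), fun w => ?_⟩
    · simp [hk, hpi]
    · simp [hl, hpi]
    · simp [hk, hl]

theorem mkQ_prod_of_retract (hpi : ∀ x, p (i x) = x) {j : M →ₗ[R] E}
    (hj : Function.Injective j) (hE : LiftsFrom 𝒯 (LinearMap.range j).mkQ) :
    ∃ (f : M →ₗ[R] ((E ⧸ LinearMap.range (j ∘ₗ i)) ×
        (E ⧸ LinearMap.range (j ∘ₗ (LinearMap.id - i ∘ₗ p)))))
      (g : ((E ⧸ LinearMap.range (j ∘ₗ i)) ×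
        (E ⧸ LinearMap.range (j ∘ₗ (LinearMap.id - i ∘ₗ p)))) →ₗ[R]
          ((E ⧸ LinearMap.range j) × (E ⧸ LinearMap.range j))),
      RelExact 𝒯 f g ∧ (∀ m, (f m).1 = (LinearMap.range (j ∘ₗ i)).mkQ (j m)) ∧
      ∀ x, g ((LinearMap.range (j ∘ₗ i)).mkQ x, 0) = ((LinearMap.range j).mkQ x, 0) := by
  refine ⟨(Submodule.mkQ _ ∘ₗ j).prod (Submodule.mkQ _ ∘ₗ j),
    (Submodule.factor (LinearMap.range_comp_le_range _ _)).prodMap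
      (Submodule.factor (LinearMap.range_comp_le_range _ _)), ⟨?_, ?_, ?_⟩, fun _ => rfl, ?_⟩
  · rw [injective_iff_map_eq_zero]
    intro m hm
    obtain ⟨h₁, h₂⟩ := Prod.ext_iff.1 hm
    obtain ⟨x, hx⟩ := (Submodule.Quotient.mk_eq_zero _).1 h₁
    obtain ⟨y, hy⟩ := (Submodule.Quotient.mk_eq_zero _).1 h₂
    have hx : i x = m := hj hx
    have hy : y - i (p y) = m := hj hy
    have hpm : p m = 0 := by rw [← hy]; simp [hpi]
    have : x = 0 := by rw [← hpi x, hx, hpm]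
    rw [← hx, this, map_zero]
  · rintro ⟨x, y⟩
    obtain ⟨x, rfl⟩ := Submodule.mkQ_surjective _ x
    obtain ⟨y, rfl⟩ := Submodule.mkQ_surjective _ y
    constructor
    · intro h
      obtain ⟨h₁, h₂⟩ := Prod.ext_iff.1 h
      obtain ⟨a, rfl⟩ := (Submodule.Quotient.mk_eq_zero _).1 h₁
      obtain ⟨b, rfl⟩ := (Submodule.Quotient.mk_eq_zero _).1 h₂
      refine ⟨a - i (p a) + i (p b), Prod.ext ?_ ?_⟩
      · refine (Submodule.Quotient.eq _).2 ⟨p b - p a, ?_⟩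
        simp only [LinearMap.comp_apply, map_sub, map_add]
        abel
      · refine (Submodule.Quotient.eq _).2 ⟨a - b, ?_⟩
        simp only [LinearMap.comp_apply, map_sub, map_add, LinearMap.sub_apply, LinearMap.id_apply]
        abel
    · rintro ⟨m, hm⟩
      rw [← hm]
      exact Prod.ext ((Submodule.Quotient.mk_eq_zero _).2 ⟨m, rfl⟩)
        ((Submodule.Quotient.mk_eq_zero _).2 ⟨m, rfl⟩)
  · intro W hW g
    obtain ⟨k, hk⟩ := hE W hW (LinearMap.fst R _ _ ∘ₗ g)
    obtain ⟨l, hl⟩ := hE W hW (LinearMap.snd R _ _ ∘ₗ g)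
    exact ⟨(Submodule.mkQ _ ∘ₗ k).prod (Submodule.mkQ _ ∘ₗ l),
      fun w => Prod.ext (hk w) (hl w)⟩
  · intro x
    simp

theorem lifts_mkQ_of_retract (hpi : ∀ x, p (i x) = x) {j : M →ₗ[R] E}
    (hj : Function.Injective j) (hE : LiftsFrom 𝒯 (LinearMap.range j).mkQ) :
    LiftsFrom 𝒯 (LinearMap.range (j ∘ₗ i)).mkQ := by
  obtain ⟨f, g, hfg, hf, hg⟩ := mkQ_prod_of_retract hpi hj hE
  intro W hW w
  obtain ⟨k, hk⟩ := hE W hW (LinearMap.fst R _ _ ∘ₗ g ∘ₗ LinearMap.inl R _ _ ∘ₗ w)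
  obtain ⟨m, hm⟩ := hfg.factor (LinearMap.inl R _ _ ∘ₗ (w - Submodule.mkQ _ ∘ₗ k)) fun v => by
    obtain ⟨e, he⟩ := Submodule.mkQ_surjective _ (w v)
    have h₁ := hk v
    have h₂ := hg (e - k v)
    simp only [LinearMap.comp_apply, LinearMap.inl_apply, LinearMap.fst_apply, ← he, hg] at h₁
    simp only [LinearMap.comp_apply, LinearMap.inl_apply, LinearMap.sub_apply, ← he, ← map_sub]
    rw [h₂, map_sub, h₁, sub_self]
    rfl
  refine ⟨k + j ∘ₗ m, fun v => ?_⟩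
  have h₁ := hf (m v)
  rw [hm] at h₁
  simp only [LinearMap.add_apply, map_add, LinearMap.comp_apply] at h₁ ⊢
  rw [← h₁]
  simp [-Submodule.mkQ_apply]

end Retract

end RelExact

/-- `Y` is the first injective cosyzygy of `X`, and `X` the first injective syzygy of `Y`,
relative to `𝒯`. -/
def InjectiveLink (𝒯 : ModuleCat.{u} R → Prop) (X Y : ModuleCat.{u} R) : Prop :=
  ∃ (E : ModuleCat.{u} R) (j : X →ₗ[R] E) (q : E →ₗ[R] Y),
    Module.Injective R E ∧ RelExact 𝒯 j q

/-- The closure of the class `B` under `𝒯`-exact extensions and retracts. -/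
inductive ExtRetractClosure (𝒯 B : ModuleCat.{u} R → Prop) : ModuleCat.{u} R → Prop
  | base (X : ModuleCat.{u} R) : B X → ExtRetractClosure 𝒯 B X
  | ext (X Y Z : ModuleCat.{u} R) (j : X →ₗ[R] Y) (q : Y →ₗ[R] Z) : RelExact 𝒯 j q →
      ExtRetractClosure 𝒯 B X → ExtRetractClosure 𝒯 B Z → ExtRetractClosure 𝒯 B Y
  | retract (M A : ModuleCat.{u} R) (i : A →ₗ[R] M) (p : M →ₗ[R] A) : (∀ x, p (i x) = x) →
      ExtRetractClosure 𝒯 B M → ExtRetractClosure 𝒯 B A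

namespace ExtRetractClosure

variable {B : ModuleCat.{u} R → Prop}

theorem of_equiv {X Y : ModuleCat.{u} R} (hX : ExtRetractClosure 𝒯 B X) (e : Y ≃ₗ[R] X) :
    ExtRetractClosure 𝒯 B Y :=
  retract X Y e.toLinearMap e.symm.toLinearMap e.symm_apply_apply hX

theorem prod {X Y : ModuleCat.{u} R} (hX : ExtRetractClosure 𝒯 B X)
    (hY : ExtRetractClosure 𝒯 B Y) : ExtRetractClosure 𝒯 B (ModuleCat.of R (X × Y)) :=
  ext X _ Y (LinearMap.inl R X Y) (LinearMap.snd R X Y) RelExact.inl_snd hX hY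

theorem exists_lifts_ker (hinj : ∀ E : ModuleCat.{u} R, Module.Injective R E → 𝒯 E)
    (hB : ∀ Y, B Y → ∃ X, B X ∧ InjectiveLink 𝒯 X Y)
    {Y : ModuleCat.{u} R} (hY : ExtRetractClosure 𝒯 B Y) :
    ∃ (E : ModuleCat.{u} R) (π : E →ₗ[R] Y), Module.Injective R E ∧ LiftsFrom 𝒯 π ∧
      ExtRetractClosure 𝒯 B (ModuleCat.of R (LinearMap.ker π)) := by
  induction hY with
  | base Y hY =>
    obtain ⟨X, hX, E, j, q, hE, h⟩ := hB Y hY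
    refine ⟨E, q, hE, h.lifts, of_equiv (base X hX) ?_⟩
    exact ((LinearEquiv.ofInjective j h.injective).trans
      (LinearEquiv.ofEq _ _ h.exact.linearMap_ker_eq.symm)).symm
  | ext X Y Z j q h _ _ ihX ihZ =>
    obtain ⟨E, π, hE, hπ, hK⟩ := ihX
    obtain ⟨E', π', hE', hπ', hK'⟩ := ihZ
    obtain ⟨s, hs⟩ := h.lifts E' (hinj E' hE') π'
    obtain rfl : q ∘ₗ s = π' := LinearMap.ext hs
    obtain ⟨f, g, hfg⟩ := h.ker_coprod hπ s
    exact ⟨ModuleCat.of R (E × E'), (j ∘ₗ π).coprod s, hE.prod hE', h.lifts_coprod hπ hπ',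
      ext _ _ _ f g hfg hK hK'⟩
  | retract M A i p hpi hM ih =>
    obtain ⟨E, π, hE, hπ, hK⟩ := ih
    obtain ⟨f, g, hfg⟩ := RelExact.ker_prod_of_retract hpi hπ
    exact ⟨E, p ∘ₗ π, hE, RelExact.lifts_comp_of_retract hpi hπ,
      retract (ModuleCat.of R (_ × _)) _ (LinearMap.inl R _ _) (LinearMap.fst R _ _)
        (fun _ => rfl) (ext (ModuleCat.of R (_ × _)) _ M f g hfg (prod hK hK) hM)⟩

theorem exists_lifts_mkQ (hR : 𝒯 (ModuleCat.of R R))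
    (hB : ∀ X, B X → ∃ Y, B Y ∧ InjectiveLink 𝒯 X Y)
    {X : ModuleCat.{u} R} (hX : ExtRetractClosure 𝒯 B X) :
    ∃ (E : ModuleCat.{u} R) (j : X →ₗ[R] E), Module.Injective R E ∧ Function.Injective j ∧
      LiftsFrom 𝒯 (LinearMap.range j).mkQ ∧
      ExtRetractClosure 𝒯 B (ModuleCat.of R (E ⧸ LinearMap.range j)) := by
  induction hX with
  | base X hX =>
    obtain ⟨Y, hY, E, j, q, hE, h⟩ := hB X hX
    let e := h.exact.linearEquivOfSurjective (h.lifts.surjective hR)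
    refine ⟨E, j, hE, h.injective, fun W hW g => ?_, of_equiv (base Y hY) e⟩
    obtain ⟨k, hk⟩ := h.lifts W hW (e.toLinearMap ∘ₗ g)
    exact ⟨k, fun w => e.injective (hk w)⟩
  | ext X Y Z j q h _ _ ihX ihZ =>
    obtain ⟨E, a, hE, ha, ha', hK⟩ := ihX
    obtain ⟨E', b, hE', hb, hb', hK'⟩ := ihZ
    obtain ⟨t, ht⟩ := hE.out j h.injective a
    have hq := h.lifts.surjective hR
    obtain ⟨f, g, hfg, -⟩ := h.mkQ_range_prod hq hb ht hb'
    exact ⟨ModuleCat.of R (E × E'), t.prod (b ∘ₗ q), hE.prod hE', h.injective_prod ha hb ht,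
      h.lifts_mkQ_range_prod hq hb ht ha' hb', ext _ _ _ f g hfg hK hK'⟩
  | retract M A i p hpi hM ih =>
    obtain ⟨E, j, hE, hj, hj', hK⟩ := ih
    obtain ⟨f, g, hfg, -⟩ := RelExact.mkQ_prod_of_retract hpi hj hj'
    exact ⟨E, j ∘ₗ i, hE, hj.comp (Function.LeftInverse.injective hpi),
      RelExact.lifts_mkQ_of_retract hpi hj hj',
      retract (ModuleCat.of R (_ × _)) _ (LinearMap.inl R _ _) (LinearMap.fst R _ _)
        (fun _ => rfl) (ext M _ (ModuleCat.of R (_ × _)) f g hfg hM (prod hK hK))⟩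

end ExtRetractClosure

theorem exists_int_seq {α : Type*} {P : α → Prop} {r : α → α → Prop}
    (hleft : ∀ y, P y → ∃ x, P x ∧ r x y) (hright : ∀ x, P x → ∃ y, P y ∧ r x y)
    (a : α) (ha : P a) : ∃ G : ℤ → α, G 1 = a ∧ ∀ n, r (G n) (G (n + 1)) := by
  choose! f hfP hf using hleft
  choose! g hgP hg using hright
  have hl (n : ℕ) : P (f^[n] a) := Function.Iterate.rec P ha hfP n
  have hr (n : ℕ) : P (g^[n] a) := Function.Iterate.rec P ha hgP n
  let G : ℤ → α
    | .ofNat 0 => f a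
    | .ofNat (n + 1) => g^[n] a
    | .negSucc n => f^[n + 2] a
  refine ⟨G, rfl, ?_⟩
  rintro ((_ | n) | (_ | n))
  · exact hf a ha
  · change r (g^[n] a) (g^[n + 1] a)
    rw [Function.iterate_succ_apply']
    exact hg _ (hr n)
  · exact hf _ (hfP a ha)
  · change r (f^[n + 3] a) (f^[n + 2] a)
    rw [Function.iterate_succ_apply' f (n + 2)]
    exact hf _ (hl (n + 2))

theorem gorensteinRelInjective_of_link {G : ℤ → ModuleCat.{u} R}
    (hR : 𝒯 (ModuleCat.of R R)) (hG : ∀ n, InjectiveLink 𝒯 (G n) (G (n + 1))) :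
    GorensteinRelInjective R 𝒯 (G 1) := by
  choose I j q hI h using hG
  have hqj (n : ℤ) (x : G n) : q n (j n x) = 0 := (h n).exact.apply_apply_eq_zero x
  have hj (n : ℤ) (x : G n) (hx : j n x = 0) : x = 0 := (h n).injective (by simpa using hx)
  have hexact (n : ℤ) : Function.Exact (j (n + 1) ∘ₗ q n) (q (n + 1)) := by
    refine fun x => ⟨fun hx => ?_, ?_⟩
    · obtain ⟨y, rfl⟩ := ((h (n + 1)).exact x).1 hx
      obtain ⟨z, rfl⟩ := (h n).lifts.surjective hR y
      exact ⟨z, rfl⟩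
    · rintro ⟨y, rfl⟩
      exact hqj _ _
  refine ⟨I, fun n => j (n + 1) ∘ₗ q n, q 0, ⟨hI, fun n x => ⟨fun hx => ?_, fun hx => ?_⟩,
    fun W hW n g => ⟨fun hg => ?_, ?_⟩⟩, (h 0).lifts.surjective hR, hexact (-1)⟩
  · exact (hexact n x).1 (hj _ _ hx)
  · exact (congrArg (j (n + 1 + 1)) ((hexact n x).2 hx)).trans (map_zero _)
  · obtain ⟨k, hk⟩ := (h (n + 1)).factor g fun w => hj _ _ (LinearMap.congr_fun hg w)
    obtain ⟨l, hl⟩ := (h n).lifts W hW k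
    exact ⟨l, LinearMap.ext fun w => by simp [hl, hk]⟩
  · rintro ⟨l, rfl⟩
    ext w
    simp [hqj]

theorem IsTotallyAcyclicInjComplex.link_ker {I : ℤ → ModuleCat.{u} R}
    {d : ∀ n : ℤ, I n →ₗ[R] I (n + 1)} (h : IsTotallyAcyclicInjComplex R 𝒯 I d) (n : ℤ) :
    InjectiveLink 𝒯 (ModuleCat.of R (LinearMap.ker (d n)))
      (ModuleCat.of R (LinearMap.ker (d (n + 1)))) := by
  obtain ⟨hI, hd, hW⟩ := h
  refine ⟨I n, (LinearMap.ker (d n)).subtype,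
    (d n).codRestrict _ fun x => (hd n).apply_apply_eq_zero x, hI n, Subtype.val_injective,
    fun x => ⟨fun hx => ⟨⟨x, congrArg Subtype.val hx⟩, rfl⟩, ?_⟩, fun W hW' g => ?_⟩
  · rintro ⟨y, rfl⟩
    exact Subtype.ext y.2
  · obtain ⟨k, hk⟩ := (hW W hW' n ((LinearMap.ker (d (n + 1))).subtype ∘ₗ g)).1
      (LinearMap.ext fun w => (g w).2)
    exact ⟨k, fun w => Subtype.ext (LinearMap.congr_fun hk w)⟩

theorem IsTotallyAcyclicInjComplex.or_projective {I : ℤ → ModuleCat.{u} R}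
    {d : ∀ n : ℤ, I n →ₗ[R] I (n + 1)} (h : IsTotallyAcyclicInjComplex R 𝒯 I d) :
    IsTotallyAcyclicInjComplex R (fun W => 𝒯 W ∨ Module.Projective R W) I d := by
  refine ⟨h.1, h.2.1, fun W hW n => ?_⟩
  obtain hW | hW := hW
  · exact h.2.2 W hW n
  refine fun g => ⟨fun hg => ?_, ?_⟩
  · obtain ⟨k, hk⟩ := Module.projective_lifting_property (d n).rangeRestrict
      (g.codRestrict _ fun w => (h.2.1 n _).1 (LinearMap.congr_fun hg w))
      (d n).surjective_rangeRestrict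
    exact ⟨k, LinearMap.ext fun w => congrArg Subtype.val (LinearMap.congr_fun hk w)⟩
  · rintro ⟨k, rfl⟩
    exact LinearMap.ext fun w => (h.2.1 n).apply_apply_eq_zero (k w)

theorem GorensteinRelInjective.of_retract
    (hinj : ∀ E : ModuleCat.{u} R, Module.Injective R E → 𝒯 E) {M A : ModuleCat.{u} R}
    (i : A →ₗ[R] M) (p : M →ₗ[R] A) (hpi : ∀ x, p (i x) = x)
    (hM : GorensteinRelInjective R 𝒯 M) : GorensteinRelInjective R 𝒯 A := by
  obtain ⟨I, d, π, hI, hπ, hdπ⟩ := hM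
  let 𝒯' : ModuleCat.{u} R → Prop := fun W => 𝒯 W ∨ Module.Projective R W
  have hR : 𝒯' (ModuleCat.of R R) := Or.inr (inferInstanceAs (Module.Projective R R))
  have hlink := hI.or_projective.link_ker
  let B : ModuleCat.{u} R → Prop := fun X => ∃ n, X = ModuleCat.of R (LinearMap.ker (d n))
  have hMB : ExtRetractClosure 𝒯' B M := by
    refine ExtRetractClosure.of_equiv (.base _ ⟨1, rfl⟩) ?_
    have hd₀ : LinearMap.ker π = LinearMap.ker (d 0) :=
      hdπ.linearMap_ker_eq.trans (hI.2.1 (-1)).linearMap_ker_eq.symm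
    have hd₁ : LinearMap.range (d 0) = LinearMap.ker (d 1) := (hI.2.1 0).linearMap_ker_eq.symm
    exact (π.quotKerEquivOfSurjective hπ).symm.trans
      ((Submodule.quotEquivOfEq _ _ hd₀).trans
        ((d 0).quotKerEquivRange.trans (LinearEquiv.ofEq _ _ hd₁)))
  obtain ⟨G, rfl, hG⟩ := exists_int_seq (P := ExtRetractClosure 𝒯' B) (r := InjectiveLink 𝒯')
    (fun Y hY => by
      obtain ⟨E, q, hE, hq, hK⟩ := ExtRetractClosure.exists_lifts_ker
        (fun E hE => Or.inl (hinj E hE)) (by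
          rintro _ ⟨n, rfl⟩
          obtain ⟨m, rfl⟩ : ∃ m, n = m + 1 := ⟨n - 1, by ring⟩
          exact ⟨_, ⟨m, rfl⟩, hlink m⟩) hY
      exact ⟨_, hK, E, _, q, hE, RelExact.of_ker hq⟩)
    (fun X hX => by
      obtain ⟨E, j, hE, hj, hj', hK⟩ := ExtRetractClosure.exists_lifts_mkQ hR (by
          rintro _ ⟨n, rfl⟩
          exact ⟨_, ⟨n + 1, rfl⟩, hlink n⟩) hX
      exact ⟨_, hK, E, j, _, hE, RelExact.of_mkQ hj hj'⟩)
    A (.retract M A i p hpi hMB)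
  obtain ⟨I, d, π, ⟨h₁, h₂, h₃⟩, h₄⟩ := gorensteinRelInjective_of_link hR hG
  exact ⟨I, d, π, ⟨h₁, h₂, fun W hW => h₃ W (Or.inl hW)⟩, h₄⟩

end RelativeExactness

/-- The class of Gorenstein weak injective modules is closed under direct summands. -/
theorem gorensteinWeakInjective_direct_summand (M A : ModuleCat.{u} R)
    (i : A →ₗ[R] M) (p : M →ₗ[R] A) (hpi : p.comp i = LinearMap.id)
    (hM : GorensteinWeakInjective R M) : GorensteinWeakInjective R A := by
  exact GorensteinRelInjective.of_retract (fun E _ => WeakInjective.of_injective E) i p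
    (LinearMap.congr_fun hpi) hM
end

section
/- If M is an R-module, and 0 → M → G^0 → ⋯ → G^{n−1} → V^n → 0 and 0 → M → Ḡ^0 → ⋯ → Ḡ^{n−1} → V̄^n → 0 are exact sequences with all G^i and Ḡ^i Gorenstein weak injective, then V^n is Gorenstein weak injective if and only if V̄^n is. -/
open CategoryTheory

universe u

variable (R : Type u) [Ring R]

theorem weakInjective_of_injective (E : ModuleCat.{u} R) (hE : Module.Injective R E) :
    WeakInjective R E := by
  intro N _
  have := (Module.injective_iff_injective_object R E).mp hE
  let P := ProjectiveResolution.of N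
  have hP : (P.complex.sc' 2 1 0).Exact :=
    (HomologicalComplex.exactAt_iff' _ 2 1 0 (by simp) (by simp)).mp (P.complex_exactAt_succ 0)
  refine ModuleCat.subsingleton_of_isZero (Limits.IsZero.of_iso ?_ (P.isoExt (R := ℤ) 1 E))
  rw [← HomologicalComplex.exactAt_iff_isZero_homology,
    HomologicalComplex.exactAt_iff' _ 0 1 2 (by simp) (by simp),
    ShortComplex.moduleCat_exact_iff]
  intro x hx
  exact ⟨hP.descToInjective x hx, hP.comp_descToInjective x hx⟩

section ExtOrthogonal

variable {R}

/-- The positive-degree right orthogonal of the weak injective modules. -/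
def WIOrthogonal (M : ModuleCat.{u} R) : Prop :=
  ∀ W : ModuleCat.{u} R, WeakInjective R W → ∀ i : ℕ,
    Subsingleton (Abelian.Ext.{u} W M (i + 1))

variable {A B C : ModuleCat.{u} R} {f : A →ₗ[R] B} {g : B →ₗ[R] C}

theorem ShortExactSeq.exists_shortExact (h : ShortExactSeq R A B C f g) :
    ∃ w : ModuleCat.ofHom f ≫ ModuleCat.ofHom g = 0,
      (ShortComplex.mk (ModuleCat.ofHom f) (ModuleCat.ofHom g) w).ShortExact :=
  ⟨ModuleCat.hom_ext h.2.2.linearMap_comp_eq_zero,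
    ModuleCat.shortComplex_shortExact _ h.2.2 h.1 h.2.1⟩

theorem WIOrthogonal.of_injective {E : ModuleCat.{u} R} (hE : Module.Injective R E) :
    WIOrthogonal E := fun W _ i =>
  have := (Module.injective_iff_injective_object R E).mp hE
  Abelian.Ext.subsingleton_of_injective W E i

theorem WIOrthogonal.middle (h : ShortExactSeq R A B C f g) (hA : WIOrthogonal A)
    (hC : WIOrthogonal C) : WIOrthogonal B := by
  intro W hW i
  obtain ⟨w, hS⟩ := h.exists_shortExact
  have := hA W hW i
  have := hC W hW i
  refine subsingleton_of_forall_eq 0 fun x => ?_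
  obtain ⟨y, rfl⟩ := Abelian.Ext.covariant_sequence_exact₂ W hS x
    (Subsingleton.elim (α := Abelian.Ext W C (i + 1)) _ _)
  rw [Subsingleton.elim (α := Abelian.Ext W A (i + 1)) y 0, Abelian.Ext.zero_comp]

theorem WIOrthogonal.right (h : ShortExactSeq R A B C f g) (hA : WIOrthogonal A)
    (hB : WIOrthogonal B) : WIOrthogonal C := by
  intro W hW i
  obtain ⟨w, hS⟩ := h.exists_shortExact
  have := hA W hW (i + 1)
  have := hB W hW i
  refine subsingleton_of_forall_eq 0 fun x => ?_
  obtain ⟨y, rfl⟩ := Abelian.Ext.covariant_sequence_exact₃ W hS x rfl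
    (Subsingleton.elim (α := Abelian.Ext W A (i + 1 + 1)) _ _)
  rw [Subsingleton.elim (α := Abelian.Ext W B (i + 1)) y 0, Abelian.Ext.zero_comp]

theorem WIOrthogonal.exists_lift (h : ShortExactSeq R A B C f g) (hA : WIOrthogonal A)
    {W : ModuleCat.{u} R} (hW : WeakInjective R W) (φ : W →ₗ[R] C) :
    ∃ ψ : W →ₗ[R] B, g ∘ₗ ψ = φ := by
  obtain ⟨w, hS⟩ := h.exists_shortExact
  have := hA W hW 0
  obtain ⟨y, hy⟩ := Abelian.Ext.covariant_sequence_exact₃ W hS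
    (Abelian.Ext.mk₀ (ModuleCat.ofHom φ)) (zero_add 1)
    (Subsingleton.elim (α := Abelian.Ext W A 1) _ _)
  obtain ⟨ψ, rfl⟩ := (Abelian.Ext.mk₀_bijective _ _).2 y
  rw [Abelian.Ext.mk₀_comp_mk₀] at hy
  exact ⟨ψ.hom, congrArg ModuleCat.Hom.hom ((Abelian.Ext.mk₀_bijective _ _).1 hy)⟩

theorem subsingleton_ext_one_of_lift (h : ShortExactSeq R A B C f g)
    (hB : Module.Injective R B) {W : ModuleCat.{u} R}
    (hlift : ∀ φ : W →ₗ[R] C, ∃ ψ : W →ₗ[R] B, g ∘ₗ ψ = φ) :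
    Subsingleton (Abelian.Ext.{u} W A 1) := by
  obtain ⟨w, hS⟩ := h.exists_shortExact
  have := (Module.injective_iff_injective_object R B).mp hB
  refine subsingleton_of_forall_eq 0 fun x => ?_
  obtain ⟨y, rfl⟩ := Abelian.Ext.covariant_sequence_exact₁ W hS x
    (Abelian.Ext.eq_zero_of_injective (I := B) _) (zero_add 1)
  obtain ⟨φ, rfl⟩ := (Abelian.Ext.mk₀_bijective _ _).2 y
  obtain ⟨ψ, hψ⟩ := hlift φ.hom
  have : φ = ModuleCat.ofHom ψ ≫ ModuleCat.ofHom g := ModuleCat.hom_ext hψ.symm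
  subst this
  have := hS.comp_extClass
  rw [← Abelian.Ext.mk₀_comp_mk₀, Abelian.Ext.comp_assoc_of_second_deg_zero]
  erw [this]
  rw [Abelian.Ext.comp_zero]

theorem subsingleton_ext_succ (h : ShortExactSeq R A B C f g)
    (hB : Module.Injective R B) {W : ModuleCat.{u} R} {i : ℕ}
    (hC : Subsingleton (Abelian.Ext.{u} W C i)) :
    Subsingleton (Abelian.Ext.{u} W A (i + 1)) := by
  obtain ⟨w, hS⟩ := h.exists_shortExact
  have := (Module.injective_iff_injective_object R B).mp hB
  refine subsingleton_of_forall_eq 0 fun x => ?_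
  obtain ⟨y, rfl⟩ := Abelian.Ext.covariant_sequence_exact₁ W hS x
    (Abelian.Ext.eq_zero_of_injective (I := B) _) rfl
  rw [Subsingleton.elim (α := Abelian.Ext W C i) y 0, Abelian.Ext.zero_comp]

end ExtOrthogonal

section Gorenstein

variable {R}

theorem shortExactSeq_ker {B C : ModuleCat.{u} R} {g : B →ₗ[R] C} (hg : Function.Surjective g) :
    ShortExactSeq R (ModuleCat.of R (LinearMap.ker g)) B C (LinearMap.ker g).subtype g :=
  ⟨Subtype.val_injective, hg, LinearMap.exact_subtype_ker_map g⟩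

theorem shortExactSeq_quotient_range {A B : ModuleCat.{u} R} {f : A →ₗ[R] B}
    (hf : Function.Injective f) :
    ShortExactSeq R A B (ModuleCat.of R (B ⧸ LinearMap.range f)) f (LinearMap.range f).mkQ :=
  ⟨hf, Submodule.mkQ_surjective _, LinearMap.exact_map_mkQ_range f⟩

theorem injective_prod {E F : ModuleCat.{u} R} (hE : Module.Injective R E)
    (hF : Module.Injective R F) : Module.Injective R (ModuleCat.of R (E × F)) := by
  refine ⟨fun X Y _ _ _ _ i hi φ => ?_⟩
  obtain ⟨α, hα⟩ := hE.out i hi (LinearMap.fst R E F ∘ₗ φ)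
  obtain ⟨β, hβ⟩ := hF.out i hi (LinearMap.snd R E F ∘ₗ φ)
  exact ⟨α.prod β, fun x => Prod.ext (hα x) (hβ x)⟩

theorem exists_injective_embedding (M : ModuleCat.{u} R) :
    ∃ (E : ModuleCat.{u} R) (i : M →ₗ[R] E), Module.Injective R E ∧ Function.Injective i :=
  let ⟨⟨E, hE, i, hi⟩⟩ := EnoughInjectives.presentation M
  ⟨E, i.hom, (Module.injective_iff_injective_object R E).mpr hE,
    (ModuleCat.mono_iff_injective i).mp hi⟩

theorem gorensteinWeakInjective_of_shortExactSeq {Z I : ℤ → ModuleCat.{u} R}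
    {f : ∀ n, Z n →ₗ[R] I n} {g : ∀ n, I n →ₗ[R] Z (n + 1)}
    (hZ : ∀ n, WIOrthogonal (Z n)) (hI : ∀ n, Module.Injective R (I n))
    (h : ∀ n, ShortExactSeq R (Z n) (I n) (Z (n + 1)) (f n) (g n)) :
    GorensteinWeakInjective R (Z (0 + 1)) := by
  refine ⟨I, fun n => f (n + 1) ∘ₗ g n, g 0, ⟨hI, fun n => ?_, fun W hW n φ => ⟨fun hφ => ?_, ?_⟩⟩,
    (h 0).2.1, ?_⟩
  · refine ((h n).2.1.comp_exact_iff_exact (g := f (n + 1 + 1) ∘ₗ g (n + 1))).mpr ?_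
    exact ((h (n + 1 + 1)).1.comp_exact_iff_exact).mpr (h (n + 1)).2.2
  · have hg : g (n + 1) ∘ₗ φ = 0 := LinearMap.ext fun w => (h (n + 1 + 1)).1 (by
      simpa using LinearMap.congr_fun hφ w)
    obtain ⟨ψ, hψ⟩ : ∃ ψ : W →ₗ[R] Z (n + 1), f (n + 1) ∘ₗ ψ = φ := by
      have hmem : ∀ w, φ w ∈ LinearMap.range (f (n + 1)) := fun w =>
        ((h (n + 1)).2.2 (φ w)).mp (LinearMap.congr_fun hg w)
      refine ⟨(LinearEquiv.ofInjective _ (h (n + 1)).1).symm.toLinearMap ∘ₗ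
        φ.codRestrict _ hmem, LinearMap.ext fun w => ?_⟩
      exact congrArg Subtype.val ((LinearEquiv.ofInjective _ (h (n + 1)).1).apply_symm_apply
        (φ.codRestrict _ hmem w))
    obtain ⟨χ, rfl⟩ := (hZ n).exists_lift (h n) hW ψ
    exact ⟨χ, hψ⟩
  · rintro ⟨ψ, rfl⟩
    ext w
    simp [(h (n + 1)).2.2.apply_apply_eq_zero]
  · have := (h (-1)).2.1.comp_exact_iff_exact (f := f (-1 + 1)) (g := g (-1 + 1))
    exact this.mpr (h (-1 + 1)).2.2

/-- A class of `WI`-orthogonal modules, each of which is a quotient of an injective module with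
kernel in the class, consists of Gorenstein weak injective modules. -/
theorem gorensteinWeakInjective_of_class (S : ModuleCat.{u} R → Prop)
    (hS : ∀ M, S M → WIOrthogonal M)
    (hcover : ∀ M, S M → ∃ (E : ModuleCat.{u} R) (g : E →ₗ[R] M), Module.Injective R E ∧
      Function.Surjective g ∧ S (ModuleCat.of R (LinearMap.ker g)))
    {M : ModuleCat.{u} R} (hM : S M) : GorensteinWeakInjective R M := by
  have left : ∀ M : {M // S M}, ∃ (K : {M // S M}) (E : ModuleCat.{u} R) (f : K.1 →ₗ[R] E)
      (g : E →ₗ[R] M.1), Module.Injective R E ∧ ShortExactSeq R K.1 E M.1 f g := by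
    rintro ⟨M, hM⟩
    obtain ⟨E, g, hE, hg, hK⟩ := hcover M hM
    exact ⟨⟨_, hK⟩, E, _, g, hE, shortExactSeq_ker hg⟩
  have right : ∀ M : {M : ModuleCat.{u} R // WIOrthogonal M},
      ∃ (C : {M : ModuleCat.{u} R // WIOrthogonal M}) (E : ModuleCat.{u} R) (f : M.1 →ₗ[R] E)
      (g : E →ₗ[R] C.1), Module.Injective R E ∧ ShortExactSeq R M.1 E C.1 f g := by
    rintro ⟨M, hM⟩
    obtain ⟨E, i, hE, hi⟩ := exists_injective_embedding M
    have h := shortExactSeq_quotient_range hi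
    exact ⟨⟨_, hM.right h (.of_injective hE)⟩, E, i, _, hE, h⟩
  choose l hl using left
  choose r hr using right
  let Z : ℤ → ModuleCat.{u} R
    | .ofNat 0 => (l ⟨M, hM⟩).1
    | .ofNat (n + 1) => (r^[n] ⟨M, hS M hM⟩).1
    | .negSucc n => (l^[n + 2] ⟨M, hM⟩).1
  have hZ : ∀ n, WIOrthogonal (Z n)
    | .ofNat 0 => hS _ (l ⟨M, hM⟩).2
    | .ofNat (n + 1) => (r^[n] ⟨M, hS M hM⟩).2
    | .negSucc n => hS _ (l^[n + 2] ⟨M, hM⟩).2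
  have hZI : ∀ n, ∃ (E : ModuleCat.{u} R) (f : Z n →ₗ[R] E) (g : E →ₗ[R] Z (n + 1)),
      Module.Injective R E ∧ ShortExactSeq R (Z n) E (Z (n + 1)) f g
    | .ofNat 0 => hl ⟨M, hM⟩
    | .ofNat (n + 1) => by
        have h := hr (r^[n] ⟨M, hS M hM⟩)
        rw [← Function.iterate_succ_apply' r] at h
        exact h
    | .negSucc 0 => hl (l ⟨M, hM⟩)
    | .negSucc (n + 1) => by
        have h := hl (l^[n + 2] ⟨M, hM⟩)
        rw [← Function.iterate_succ_apply' l] at h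
        exact h
  choose I f g hI h using hZI
  exact gorensteinWeakInjective_of_shortExactSeq hZ hI h

namespace GorensteinWeakInjective

theorem wiOrthogonal_and_exists_cover {M : ModuleCat.{u} R} (hM : GorensteinWeakInjective R M) :
    WIOrthogonal M ∧ ∃ (E : ModuleCat.{u} R) (g : E →ₗ[R] M), Module.Injective R E ∧
      Function.Surjective g ∧ GorensteinWeakInjective R (ModuleCat.of R (LinearMap.ker g)) := by
  obtain ⟨I, d, π, ⟨hI, hd, hW⟩, hπ, hdπ⟩ := hM
  have hmem : ∀ n x, d n x ∈ LinearMap.ker (d (n + 1)) := fun n => (hd n).apply_apply_eq_zero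
  have hker : ∀ n, LinearMap.ker ((d n).codRestrict _ (hmem n)) = LinearMap.ker (d n) :=
    fun n => LinearMap.ker_codRestrict _ _ _
  have hsurj : ∀ n, Function.Surjective ((d n).codRestrict _ (hmem n)) := by
    rintro n ⟨y, hy⟩
    obtain ⟨x, rfl⟩ := (hd n y).mp hy
    exact ⟨x, rfl⟩
  have hses : ∀ n, ShortExactSeq R (ModuleCat.of R (LinearMap.ker (d n))) (I n)
      (ModuleCat.of R (LinearMap.ker (d (n + 1)))) (LinearMap.ker (d n)).subtype
      ((d n).codRestrict _ (hmem n)) := fun n =>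
    ⟨Subtype.val_injective, hsurj n, by
      rw [LinearMap.exact_iff, hker, Submodule.range_subtype]⟩
  have horth : ∀ n, WIOrthogonal (ModuleCat.of R (LinearMap.ker (d n))) := by
    intro n W hWI i
    induction i generalizing n with
    | zero =>
      refine subsingleton_ext_one_of_lift (hses n) (hI n) fun φ => ?_
      obtain ⟨ψ, hψ⟩ := (hW W hWI n ((LinearMap.ker (d (n + 1))).subtype ∘ₗ φ)).mp
        (LinearMap.ext fun w => (φ w).2)
      exact ⟨ψ, LinearMap.ext fun w => Subtype.ext (LinearMap.congr_fun hψ w)⟩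
    | succ i ih => exact subsingleton_ext_succ (hses n) (hI n) (ih (n + 1))
  have hπker : LinearMap.ker π = LinearMap.ker (d 0) :=
    (LinearMap.exact_iff.mp hdπ).trans (LinearMap.exact_iff.mp (hd (-1))).symm
  have hπses := shortExactSeq_ker hπ
  refine ⟨.right hπses ?_ (.of_injective (hI 0)), I 0, π, hI 0, hπ, ?_⟩
  · rw [hπker]
    exact horth 0
  · rw [hπker]
    refine gorensteinWeakInjective_of_class
      (fun X => ∃ n, X = ModuleCat.of R (LinearMap.ker (d n))) ?_ ?_ ⟨0, rfl⟩
    · rintro _ ⟨n, rfl⟩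
      exact horth n
    · rintro _ ⟨n, rfl⟩
      obtain ⟨m, rfl⟩ : ∃ m, n = m + 1 := ⟨n - 1, by ring⟩
      exact ⟨I m, (d m).codRestrict _ (hmem m), hI m, hsurj m, m, by rw [hker]⟩

theorem wiOrthogonal {M : ModuleCat.{u} R} (hM : GorensteinWeakInjective R M) : WIOrthogonal M :=
  hM.wiOrthogonal_and_exists_cover.1

theorem of_cover {M E : ModuleCat.{u} R} {g : E →ₗ[R] M} (hM : WIOrthogonal M)
    (hE : Module.Injective R E) (hg : Function.Surjective g)
    (hK : GorensteinWeakInjective R (ModuleCat.of R (LinearMap.ker g))) :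
    GorensteinWeakInjective R M :=
  gorensteinWeakInjective_of_class
    (fun M => WIOrthogonal M ∧ ∃ (E : ModuleCat.{u} R) (g : E →ₗ[R] M), Module.Injective R E ∧
      Function.Surjective g ∧ GorensteinWeakInjective R (ModuleCat.of R (LinearMap.ker g)))
    (fun _ h => h.1)
    (fun _ ⟨_, E, g, hE, hg, hK⟩ => ⟨E, g, hE, hg, hK.wiOrthogonal_and_exists_cover⟩)
    ⟨hM, E, g, hE, hg, hK⟩

theorem of_injective {E : ModuleCat.{u} R} (hE : Module.Injective R E) :
    GorensteinWeakInjective R E := by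
  refine gorensteinWeakInjective_of_class (fun E => Module.Injective R E)
    (fun _ h => .of_injective h) (fun E hE => ⟨E, LinearMap.id, hE, Function.surjective_id, ?_⟩) hE
  rw [LinearMap.ker_id]
  exact ⟨fun _ _ _ _ _ _ _ _ _ => ⟨0, fun _ => Subsingleton.elim _ _⟩⟩

/-- Gorenstein weak injective modules are closed under extensions. -/
theorem extension {A B C : ModuleCat.{u} R} {f : A →ₗ[R] B} {g : B →ₗ[R] C}
    (h : ShortExactSeq R A B C f g) (hA : GorensteinWeakInjective R A)
    (hC : GorensteinWeakInjective R C) : GorensteinWeakInjective R B := by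
  refine gorensteinWeakInjective_of_class
    (fun B => ∃ (A C : ModuleCat.{u} R) (f : A →ₗ[R] B) (g : B →ₗ[R] C),
      ShortExactSeq R A B C f g ∧ GorensteinWeakInjective R A ∧ GorensteinWeakInjective R C)
    ?_ ?_ ⟨A, C, f, g, h, hA, hC⟩
  · rintro B ⟨A, C, f, g, h, hA, hC⟩
    exact hA.wiOrthogonal.middle h hC.wiOrthogonal
  · rintro B ⟨A, C, f, g, h, hA, hC⟩
    obtain ⟨hAo, E, p, hE, hp, hKp⟩ := hA.wiOrthogonal_and_exists_cover
    obtain ⟨-, F, q, hF, hq, hKq⟩ := hC.wiOrthogonal_and_exists_cover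
    obtain ⟨s, rfl⟩ := hAo.exists_lift h (weakInjective_of_injective R F hF) q
    let σ : ModuleCat.of R (E × F) →ₗ[R] B := (f ∘ₗ p).coprod s
    have hσ : ∀ x, σ x = f (p x.1) + s x.2 := fun x => rfl
    have hgf : ∀ a, g (f a) = 0 := h.2.2.apply_apply_eq_zero
    refine ⟨ModuleCat.of R (E × F), σ, ?_, fun b => ?_, _, _,
      (LinearMap.inl R E F).restrict (p := LinearMap.ker p) (q := LinearMap.ker σ) fun x hx => ?_,
      (LinearMap.snd R E F).restrict (p := LinearMap.ker σ) (q := LinearMap.ker (g ∘ₗ s))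
        fun x hx => ?_, ⟨?_, ?_, ?_⟩, hKp, hKq⟩
    · exact injective_prod hE hF
    · obtain ⟨y, hy⟩ := hq (g b)
      obtain ⟨a, ha⟩ := (h.2.2 (b - s y)).mp (by simpa [sub_eq_zero] using hy.symm)
      obtain ⟨x, rfl⟩ := hp a
      exact ⟨(x, y), by rw [hσ, ha, sub_add_cancel]⟩
    · rw [LinearMap.mem_ker] at hx ⊢
      simp [hσ, hx]
    · rw [LinearMap.mem_ker, hσ] at hx
      simpa [hgf] using congrArg g hx
    · rintro ⟨x, hx⟩ ⟨y, hy⟩ hxy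
      exact Subtype.ext (congrArg (fun z => z.1.1) hxy)
    · rintro ⟨y, hy⟩
      obtain ⟨a, ha⟩ := (h.2.2 (- s y)).mp (by simpa using hy)
      obtain ⟨x, rfl⟩ := hp a
      exact ⟨⟨(x, y), by rw [LinearMap.mem_ker, hσ, ha, neg_add_cancel]⟩, rfl⟩
    · rintro ⟨⟨x, y⟩, hxy⟩
      constructor
      · intro hy
        obtain rfl : y = 0 := congrArg Subtype.val hy
        exact ⟨⟨x, h.1 (by simpa [hσ] using hxy)⟩, rfl⟩
      · rintro ⟨x, hx⟩
        exact Subtype.ext (congrArg (fun z => z.1.2) hx).symm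

/-- Gorenstein weak injective modules are closed under cokernels of monomorphisms. -/
theorem cokernel {A B C : ModuleCat.{u} R} {f : A →ₗ[R] B} {g : B →ₗ[R] C}
    (h : ShortExactSeq R A B C f g) (hA : GorensteinWeakInjective R A)
    (hB : GorensteinWeakInjective R B) : GorensteinWeakInjective R C := by
  obtain ⟨hBo, E, q, hE, hq, hK⟩ := hB.wiOrthogonal_and_exists_cover
  refine of_cover (hA.wiOrthogonal.right h hBo) (g := g ∘ₗ q) hE (h.2.1.comp hq) ?_
  have hmem : ∀ x : LinearMap.ker (g ∘ₗ q), q x ∈ LinearMap.range f := fun x =>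
    (h.2.2 (q x)).mp x.2
  let e := LinearEquiv.ofInjective f h.1
  let t : LinearMap.ker (g ∘ₗ q) →ₗ[R] A :=
    e.symm.toLinearMap ∘ₗ (q ∘ₗ (LinearMap.ker (g ∘ₗ q)).subtype).codRestrict _ hmem
  have ht : ∀ x, f (t x) = q x := fun x => congrArg Subtype.val (e.apply_symm_apply ⟨q x, hmem x⟩)
  refine extension (A := ModuleCat.of R (LinearMap.ker q)) (C := A)
    (f := Submodule.inclusion (LinearMap.ker_le_ker_comp q g)) (g := t)
    ⟨Submodule.inclusion_injective _, fun a => ?_, fun x => ?_⟩ hK hA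
  · obtain ⟨x, hx⟩ := hq (f a)
    have hx' : x ∈ LinearMap.ker (g ∘ₗ q) := by
      simp [hx, h.2.2.apply_apply_eq_zero]
    exact ⟨⟨x, hx'⟩, h.1 ((ht _).trans hx)⟩
  · rw [← h.1.eq_iff, ht, map_zero]
    constructor
    · exact fun hx => ⟨⟨x, hx⟩, rfl⟩
    · rintro ⟨y, rfl⟩
      exact y.2

theorem ker_of_injective {A B : ModuleCat.{u} R} {f : A →ₗ[R] B} (hf : Function.Injective f) :
    GorensteinWeakInjective R (ModuleCat.of R (LinearMap.ker f)) := by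
  rw [LinearMap.ker_eq_bot.mpr hf]
  exact .of_injective ⟨fun _ _ _ _ _ _ _ _ _ => ⟨0, fun _ => Subsingleton.elim _ _⟩⟩

theorem of_linearEquiv {A B : ModuleCat.{u} R} (e : A ≃ₗ[R] B)
    (hA : GorensteinWeakInjective R A) : GorensteinWeakInjective R B :=
  cokernel (shortExactSeq_ker (g := e.toLinearMap) e.surjective) (ker_of_injective e.injective) hA

theorem ker {A B C : ModuleCat.{u} R} {f : A →ₗ[R] B} {g : B →ₗ[R] C}
    (h : ShortExactSeq R A B C f g) (hA : GorensteinWeakInjective R A) :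
    GorensteinWeakInjective R (ModuleCat.of R (LinearMap.ker g)) :=
  of_linearEquiv ((LinearEquiv.ofInjective f h.1).trans
    (LinearEquiv.ofEq _ _ (LinearMap.exact_iff.mp h.2.2).symm)) hA

theorem prod {A B : ModuleCat.{u} R} (hA : GorensteinWeakInjective R A)
    (hB : GorensteinWeakInjective R B) : GorensteinWeakInjective R (ModuleCat.of R (A × B)) :=
  extension (f := LinearMap.inl R A B) (g := LinearMap.snd R A B)
    ⟨LinearMap.inl_injective, LinearMap.snd_surjective, .inl_snd⟩ hA hB

end GorensteinWeakInjective

end Gorenstein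

section Cosyzygy

variable {R}

/-- Two modules are linked if some module surjects onto both of them with Gorenstein weak
injective kernels. -/
def GWILinked (V V' : ModuleCat.{u} R) : Prop :=
  ∃ (X : ModuleCat.{u} R) (g : X →ₗ[R] V) (g' : X →ₗ[R] V'),
    Function.Surjective g ∧ Function.Surjective g' ∧
    GorensteinWeakInjective R (ModuleCat.of R (LinearMap.ker g)) ∧
    GorensteinWeakInjective R (ModuleCat.of R (LinearMap.ker g'))

namespace GWILinked

theorem refl (V : ModuleCat.{u} R) : GWILinked V V :=
  have h := GorensteinWeakInjective.ker_of_injective (f := (LinearMap.id : V →ₗ[R] V))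
    Function.injective_id
  ⟨V, .id, .id, Function.surjective_id, Function.surjective_id, h, h⟩

theorem symm {V V' : ModuleCat.{u} R} (h : GWILinked V V') : GWILinked V' V :=
  let ⟨X, g, g', hg, hg', hK, hK'⟩ := h
  ⟨X, g', g, hg', hg, hK', hK⟩

theorem gorensteinWeakInjective {V V' : ModuleCat.{u} R} (h : GWILinked V V')
    (hV : GorensteinWeakInjective R V) : GorensteinWeakInjective R V' :=
  let ⟨_, _, _, hg, hg', hK, hK'⟩ := h
  .cokernel (shortExactSeq_ker hg') hK' (.extension (shortExactSeq_ker hg) hK hV)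

/-- In a surjection of monomorphisms `(X → H) → (V → G)` with Gorenstein weak injective kernels,
the induced surjection of cokernels has Gorenstein weak injective kernel. -/
theorem exists_cokernel_map {X H V G C : ModuleCat.{u} R} {i : X →ₗ[R] H} {g : X →ₗ[R] V}
    {p : H →ₗ[R] G} {j : V →ₗ[R] G} {k : G →ₗ[R] C} (hi : Function.Injective i)
    (hg : Function.Surjective g) (hp : Function.Surjective p) (hjk : ShortExactSeq R V G C j k)
    (hcomm : p ∘ₗ i = j ∘ₗ g) (hKg : GorensteinWeakInjective R (ModuleCat.of R (LinearMap.ker g)))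
    (hKp : GorensteinWeakInjective R (ModuleCat.of R (LinearMap.ker p))) :
    ∃ q : ModuleCat.of R (H ⧸ LinearMap.range i) →ₗ[R] C, Function.Surjective q ∧
      GorensteinWeakInjective R (ModuleCat.of R (LinearMap.ker q)) := by
  have hpi : ∀ x, p (i x) = j (g x) := LinearMap.congr_fun hcomm
  have hkj : ∀ v, k (j v) = 0 := hjk.2.2.apply_apply_eq_zero
  let q : (H ⧸ LinearMap.range i) →ₗ[R] C := (LinearMap.range i).liftQ (k ∘ₗ p) (by
    rintro _ ⟨x, rfl⟩
    simp [hpi, hkj])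
  have hq : ∀ h, q ((LinearMap.range i).mkQ h) = k (p h) := fun h => rfl
  refine ⟨q, fun c => ?_, ?_⟩
  · obtain ⟨y, rfl⟩ := hjk.2.1 c
    obtain ⟨h, rfl⟩ := hp y
    exact ⟨_, hq h⟩
  · refine .cokernel
      (f := i.restrict (p := LinearMap.ker g) (q := LinearMap.ker p) fun x hx => ?_)
      (g := (LinearMap.range i).mkQ.restrict (p := LinearMap.ker p) (q := LinearMap.ker q)
        fun x hx => ?_) ⟨?_, ?_, ?_⟩ hKg hKp
    · rw [LinearMap.mem_ker] at hx ⊢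
      rw [hpi, hx, map_zero]
    · rw [LinearMap.mem_ker] at hx ⊢
      rw [hq, hx, map_zero]
    · exact fun x y hxy => Subtype.ext (hi (congrArg Subtype.val hxy))
    · rintro ⟨y, hy⟩
      obtain ⟨h, rfl⟩ := Submodule.mkQ_surjective _ y
      obtain ⟨v, hv⟩ := (hjk.2.2 (p h)).mp hy
      obtain ⟨x, rfl⟩ := hg v
      refine ⟨⟨h - i x, by rw [LinearMap.mem_ker, map_sub, hpi, hv, sub_self]⟩, Subtype.ext ?_⟩
      exact (Submodule.Quotient.eq _).mpr ⟨-x, by simp⟩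
    · rintro ⟨h, hh⟩
      constructor
      · intro h0
        obtain ⟨x, rfl⟩ : h ∈ LinearMap.range i :=
          (Submodule.Quotient.mk_eq_zero _).mp (congrArg Subtype.val h0)
        exact ⟨⟨x, hjk.1 (by rw [← hpi, map_zero]; exact hh)⟩, rfl⟩
      · rintro ⟨x, hx⟩
        exact Subtype.ext ((Submodule.Quotient.mk_eq_zero _).mpr ⟨x.1, congrArg Subtype.val hx⟩)

/-- Cokernels of embeddings of linked modules into Gorenstein weak injective modules are linked. -/
theorem cokernel {V V' G G' C C' : ModuleCat.{u} R} {j : V →ₗ[R] G} {k : G →ₗ[R] C}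
    {j' : V' →ₗ[R] G'} {k' : G' →ₗ[R] C'} (h : GWILinked V V') (hjk : ShortExactSeq R V G C j k)
    (hjk' : ShortExactSeq R V' G' C' j' k') (hG : GorensteinWeakInjective R G)
    (hG' : GorensteinWeakInjective R G') : GWILinked C C' := by
  obtain ⟨X, g, g', hg, hg', hK, hK'⟩ := h
  obtain ⟨E, e, hE, he⟩ := exists_injective_embedding X
  let i : X →ₗ[R] E × G × G' := e.prod ((j ∘ₗ g).prod (j' ∘ₗ g'))
  have hi : Function.Injective i := fun x y hxy => he (congrArg Prod.fst hxy)
  let p : ModuleCat.of R (E × G × G') →ₗ[R] G := LinearMap.fst R G G' ∘ₗ LinearMap.snd R E (G × G')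
  let p' : ModuleCat.of R (E × G × G') →ₗ[R] G' :=
    LinearMap.snd R G G' ∘ₗ LinearMap.snd R E (G × G')
  have hp : ShortExactSeq R (ModuleCat.of R (E × G')) (ModuleCat.of R (E × G × G')) G
      (LinearMap.prodMap LinearMap.id (LinearMap.inr R G G')) p := by
    refine ⟨fun x y hxy => ?_, fun y => ⟨(0, y, 0), rfl⟩, fun ⟨x, y, z⟩ => ⟨?_, ?_⟩⟩
    · simpa [Prod.ext_iff] using hxy
    · rintro rfl
      exact ⟨(x, z), rfl⟩
    · rintro ⟨w, hw⟩
      exact (congrArg (fun t => t.2.1) hw).symm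
  have hp' : ShortExactSeq R (ModuleCat.of R (E × G)) (ModuleCat.of R (E × G × G')) G'
      (LinearMap.prodMap LinearMap.id (LinearMap.inl R G G')) p' := by
    refine ⟨fun x y hxy => ?_, fun z => ⟨(0, 0, z), rfl⟩, fun ⟨x, y, z⟩ => ⟨?_, ?_⟩⟩
    · simpa [Prod.ext_iff] using hxy
    · rintro rfl
      exact ⟨(x, y), rfl⟩
    · rintro ⟨w, hw⟩
      exact (congrArg (fun t => t.2.2) hw).symm
  have hE' := GorensteinWeakInjective.of_injective hE
  obtain ⟨q, hq, hKq⟩ := exists_cokernel_map (H := ModuleCat.of R (E × G × G')) (i := i) hi hg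
    hp.2.1 hjk rfl hK (.ker hp (hE'.prod hG'))
  obtain ⟨q', hq', hKq'⟩ := exists_cokernel_map (H := ModuleCat.of R (E × G × G')) (i := i) hi hg'
    hp'.2.1 hjk' rfl hK' (.ker hp' (hE'.prod hG))
  exact ⟨_, q, q', hq, hq', hKq, hKq'⟩

theorem of_linearEquiv {V V' U U' : ModuleCat.{u} R} (e : V ≃ₗ[R] U) (e' : V' ≃ₗ[R] U')
    (h : GWILinked V V') : GWILinked U U' := by
  obtain ⟨X, g, g', hg, hg', hK, hK'⟩ := h
  refine ⟨X, e.toLinearMap ∘ₗ g, e'.toLinearMap ∘ₗ g', e.surjective.comp hg,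
    e'.surjective.comp hg', ?_, ?_⟩
  · rwa [LinearEquiv.ker_comp]
  · rwa [LinearEquiv.ker_comp]

end GWILinked

namespace IsFiniteCoresolution

variable {M : ModuleCat.{u} R} {n : ℕ} {G : ℕ → ModuleCat.{u} R} {d : ∀ i, G i →ₗ[R] G (i + 1)}
  {ε : M →ₗ[R] G 0}

theorem bijective_of_length_zero (h : IsFiniteCoresolution R M 0 G d ε) :
    Function.Bijective ε :=
  ⟨h.1, fun x => (h.2.1 x).mp (h.2.2.2 1 one_pos _)⟩

theorem exists_cosyzygy (h : IsFiniteCoresolution R M (n + 1) G d ε) :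
    ∃ (V : ModuleCat.{u} R) (p : G 0 →ₗ[R] V) (i : V →ₗ[R] G 1), ShortExactSeq R M (G 0) V ε p ∧
      IsFiniteCoresolution R V n (fun i => G (i + 1)) (fun i => d (i + 1)) i := by
  obtain ⟨hε, hεd, hd, hG⟩ := h
  refine ⟨ModuleCat.of R (LinearMap.range (d 0)), (d 0).rangeRestrict,
    (LinearMap.range (d 0)).subtype, ⟨hε, (d 0).surjective_rangeRestrict, ?_⟩,
    Subtype.val_injective, ?_, fun i => hd (i + 1), fun i hi => hG (i + 1) (by omega)⟩
  · rw [LinearMap.exact_iff, LinearMap.ker_rangeRestrict]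
    exact LinearMap.exact_iff.mp hεd
  · rw [LinearMap.exact_iff, Submodule.range_subtype]
    exact LinearMap.exact_iff.mp (hd 0)

theorem gwiLinked {M' : ModuleCat.{u} R} (hM : GWILinked M M')
    {G' : ℕ → ModuleCat.{u} R} {d' : ∀ i, G' i →ₗ[R] G' (i + 1)} {ε' : M' →ₗ[R] G' 0}
    (h : IsFiniteCoresolution R M n G d ε) (hG : ∀ i < n, GorensteinWeakInjective R (G i))
    (h' : IsFiniteCoresolution R M' n G' d' ε')
    (hG' : ∀ i < n, GorensteinWeakInjective R (G' i)) : GWILinked (G n) (G' n) := by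
  induction n generalizing M M' G G' with
  | zero =>
    exact hM.of_linearEquiv (.ofBijective ε h.bijective_of_length_zero)
      (.ofBijective ε' h'.bijective_of_length_zero)
  | succ n ih =>
    obtain ⟨V, p, i, hV, hres⟩ := h.exists_cosyzygy
    obtain ⟨V', p', i', hV', hres'⟩ := h'.exists_cosyzygy
    exact ih (hM.cokernel hV hV' (hG 0 n.succ_pos) (hG' 0 n.succ_pos)) hres
      (fun i hi => hG (i + 1) (by omega)) hres' (fun i hi => hG' (i + 1) (by omega))

end IsFiniteCoresolution

end Cosyzygy

/-- If `0 → M → G^0 → ⋯ → G^{n-1} → V^n → 0` and `0 → M → Ḡ^0 → ⋯ → Ḡ^{n-1} → V̄^n → 0`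
are exact with all `G^i`, `Ḡ^i` Gorenstein weak injective, then `V^n` is Gorenstein weak
injective iff `V̄^n` is. -/
theorem gorensteinWeakInjective_cosyzygy_iff (M : ModuleCat.{u} R) (n : ℕ)
    (G : ℕ → ModuleCat.{u} R) (d : ∀ i, G i →ₗ[R] G (i + 1)) (ε : M →ₗ[R] G 0)
    (hG : IsFiniteCoresolution R M n G d ε)
    (hGgwi : ∀ i < n, GorensteinWeakInjective R (G i))
    (G' : ℕ → ModuleCat.{u} R) (d' : ∀ i, G' i →ₗ[R] G' (i + 1)) (ε' : M →ₗ[R] G' 0)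
    (hG' : IsFiniteCoresolution R M n G' d' ε')
    (hG'gwi : ∀ i < n, GorensteinWeakInjective R (G' i)) :
    GorensteinWeakInjective R (G n) ↔ GorensteinWeakInjective R (G' n) := by
  have h := hG.gwiLinked (.refl M) hGgwi hG' hG'gwi
  exact ⟨h.gorensteinWeakInjective, h.symm.gorensteinWeakInjective⟩
end
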